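/- Let ξ be a real random variable whose law has a density φ with respect to Lebesgue measure that is strictly positive on all of ℝ and log-concave (x ↦ log φ(x) is concave on ℝ). Then for every δ ≥ 0 and every bounded non-decreasing function g : ℝ → ℝ, E[g(ξ+δ)·1{ξ+δ > 0}] / P(ξ+δ > 0) ≥ E[g(ξ)·1{ξ > 0}] / P(ξ > 0); both probabilities are strictly positive because φ > 0 everywhere. -/

import Mathlib

open MeasureTheory

/-!
Since `log φ` is concave, the likelihood ratio `φ (x - δ) / φ x` of the densities of `ξ + δ` and `ξ`
is non-decreasing in `x`. For densities `a`, `b` with `b / a` non-decreasing and `g` non-decreasing,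
the product `(g x - g y) * (b x * a y - b y * a x)` is nonnegative for all `x` and `y`; integrating
it over the square of any event compares the two conditional expectations of `g` on that event.
-/

section MonotoneLikelihoodRatio

variable {α : Type*} [LinearOrder α] {a b g : α → ℝ}

/-- The likelihood ratio `b / a` is non-decreasing, the standard sufficient condition for comparing
the laws with densities `a` and `b` conditionally on every event. It is cross-multiplied, so that
zeros of `a` are allowed. -/
def MonotoneLikelihoodRatio (a b : α → ℝ) : Prop :=
  ∀ ⦃x y⦄, x ≤ y → b x * a y ≤ b y * a x

lemma MonotoneLikelihoodRatio.sub_mul_sub_nonneg (hab : MonotoneLikelihoodRatio a b)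
    (hg : Monotone g) (x y : α) : 0 ≤ (g x - g y) * (b x * a y - b y * a x) := by
  rcases le_total x y with hxy | hyx
  · exact mul_nonneg_of_nonpos_of_nonpos (sub_nonpos.2 (hg hxy)) (sub_nonpos.2 (hab hxy))
  · exact mul_nonneg (sub_nonneg.2 (hg hyx)) (sub_nonneg.2 (hab hyx))

theorem MonotoneLikelihoodRatio.integral_mul_integral_le [MeasurableSpace α] {μ : Measure α}
    [SFinite μ] (hab : MonotoneLikelihoodRatio a b) (hg : Monotone g) (ha : Integrable a μ)
    (hb : Integrable b μ) (hag : Integrable (fun x ↦ a x * g x) μ)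
    (hbg : Integrable (fun x ↦ b x * g x) μ) :
    (∫ x, a x * g x ∂μ) * ∫ x, b x ∂μ ≤ (∫ x, b x * g x ∂μ) * ∫ x, a x ∂μ := by
  let F : α × α → ℝ := fun z ↦ b z.1 * g z.1 * a z.2 - a z.1 * g z.1 * b z.2
  have hF : Integrable F (μ.prod μ) := (hbg.mul_prod ha).sub (hag.mul_prod hb)
  have symmetrized_nonneg : 0 ≤ ∫ z, F z + F z.swap ∂μ.prod μ := by
    refine integral_nonneg fun z ↦ (hab.sub_mul_sub_nonneg hg z.1 z.2).trans_eq ?_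
    simp only [F, Prod.fst_swap, Prod.snd_swap]
    ring
  have integral_symmetrized : ∫ z, F z + F z.swap ∂μ.prod μ = 2 * ∫ z, F z ∂μ.prod μ :=
    (integral_add hF hF.swap).trans (by
      simp only [Function.comp_apply, integral_prod_swap, two_mul])
  have integral_F : ∫ z, F z ∂μ.prod μ =
      (∫ x, b x * g x ∂μ) * (∫ x, a x ∂μ) - (∫ x, a x * g x ∂μ) * (∫ x, b x ∂μ) := by
    rw [integral_sub (hbg.mul_prod ha) (hag.mul_prod hb),
      integral_prod_mul (fun x ↦ b x * g x) a, integral_prod_mul (fun x ↦ a x * g x) b]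
  linarith

end MonotoneLikelihoodRatio

section LogConcave

lemma concaveOn_add_le_add_of_mem_segment {𝕜 E β : Type*} [CommRing 𝕜] [PartialOrder 𝕜]
    [AddCommGroup E] [Module 𝕜 E] [AddCommMonoid β] [PartialOrder β] [IsOrderedAddMonoid β]
    [Module 𝕜 β] {s : Set E} {f : E → β} (hf : ConcaveOn 𝕜 s f) {p q u v : E} (hp : p ∈ s)
    (hq : q ∈ s) (hu : u ∈ segment 𝕜 p q) (huv : u + v = p + q) : f p + f q ≤ f u + f v := by
  obtain ⟨c, d, hc, hd, hcd, rfl⟩ := hu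
  have hv : v = d • p + c • q := by
    have hv' : v = (c + d) • (p + q) - (c • p + d • q) := by
      rw [hcd, one_smul, eq_sub_iff_add_eq', huv]
    rw [hv']
    module
  calc f p + f q = (c + d) • f p + (c + d) • f q := by simp only [hcd, one_smul]
    _ = (c • f p + d • f q) + (d • f p + c • f q) := by module
    _ ≤ f (c • p + d • q) + f v :=
      add_le_add (hf.2 hp hq hc hd hcd) (hv ▸ hf.2 hp hq hd hc (add_comm d c ▸ hcd))

lemma monotoneLikelihoodRatio_comp_sub_right {φ : ℝ → ℝ} (hφpos : ∀ x, 0 < φ x)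
    (hφconc : ConcaveOn ℝ Set.univ fun x ↦ Real.log (φ x)) {δ : ℝ} (hδ : 0 ≤ δ) :
    MonotoneLikelihoodRatio φ fun x ↦ φ (x - δ) := by
  intro x y hxy
  have hx : x ∈ segment ℝ (x - δ) y := by
    rw [segment_eq_Icc (by linarith)]
    exact ⟨by linarith, hxy⟩
  have hlog := concaveOn_add_le_add_of_mem_segment hφconc (Set.mem_univ _) (Set.mem_univ _) hx
    (v := y - δ) (by ring)
  rw [← Real.log_le_log_iff (mul_pos (hφpos _) (hφpos _)) (mul_pos (hφpos _) (hφpos _)),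
    Real.log_mul (hφpos _).ne' (hφpos _).ne', Real.log_mul (hφpos _).ne' (hφpos _).ne']
  linarith

lemma continuous_of_concaveOn_log {E : Type*} [NormedAddCommGroup E] [NormedSpace ℝ E]
    [FiniteDimensional ℝ E] {φ : E → ℝ} (hφpos : ∀ x, 0 < φ x)
    (hφconc : ConcaveOn ℝ Set.univ fun x ↦ Real.log (φ x)) : Continuous φ := by
  have hlog : Continuous fun x ↦ Real.log (φ x) :=
    continuousOn_univ.1 (hφconc.continuousOn isOpen_univ)
  simpa only [Real.exp_log (hφpos _)] using hlog.rexp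

end LogConcave

section Density

variable {Ω α : Type*} [MeasurableSpace Ω] [MeasurableSpace α] {P : Measure Ω} {μ : Measure α}
  {X : Ω → α} {f h : α → ℝ} {s : Set α}

lemma setIntegral_comp_eq_of_map_eq_withDensity (hX : AEMeasurable X P)
    (hlaw : P.map X = μ.withDensity fun x ↦ ENNReal.ofReal (f x)) (hf : Measurable f)
    (hf0 : ∀ x, 0 ≤ f x) (hh : Measurable h) (hs : MeasurableSet s) :
    ∫ ω in X ⁻¹' s, h (X ω) ∂P = ∫ x in s, f x * h x ∂μ := by
  rw [← setIntegral_map hs hh.aestronglyMeasurable hX, hlaw,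
    setIntegral_withDensity_eq_setIntegral_toReal_smul hf.ennreal_ofReal (by simp) _ hs]
  simp only [ENNReal.toReal_ofReal (hf0 _), smul_eq_mul]

lemma integrableOn_comp_iff_of_map_eq_withDensity (hX : AEMeasurable X P)
    (hlaw : P.map X = μ.withDensity fun x ↦ ENNReal.ofReal (f x)) (hf : Measurable f)
    (hf0 : ∀ x, 0 ≤ f x) (hh : Measurable h) (hs : MeasurableSet s) :
    IntegrableOn (fun ω ↦ h (X ω)) (X ⁻¹' s) P ↔ IntegrableOn (fun x ↦ f x * h x) s μ := by
  have hmap : (P.restrict (X ⁻¹' s)).map X =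
      (μ.restrict s).withDensity fun x ↦ ENNReal.ofReal (f x) := by
    rw [← Measure.restrict_map_of_aemeasurable hX hs, hlaw, restrict_withDensity hs]
  rw [IntegrableOn, ← Function.comp_def,
    ← integrable_map_measure hh.aestronglyMeasurable hX.restrict, hmap,
    integrable_withDensity_iff_integrable_smul' hf.ennreal_ofReal (by simp)]
  simp only [ENNReal.toReal_ofReal (hf0 _), smul_eq_mul, IntegrableOn]

lemma toReal_measure_preimage_eq_of_map_eq_withDensity (hX : AEMeasurable X P)
    (hlaw : P.map X = μ.withDensity fun x ↦ ENNReal.ofReal (f x)) (hf : Measurable f)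
    (hf0 : ∀ x, 0 ≤ f x) (hs : MeasurableSet s) :
    (P (X ⁻¹' s)).toReal = ∫ x in s, f x ∂μ := by
  simpa [Measure.real] using setIntegral_comp_eq_of_map_eq_withDensity hX hlaw hf hf0
    (measurable_const (a := (1 : ℝ))) hs

lemma integrableOn_of_map_eq_withDensity [IsFiniteMeasure P] (hX : AEMeasurable X P)
    (hlaw : P.map X = μ.withDensity fun x ↦ ENNReal.ofReal (f x)) (hf : Measurable f)
    (hf0 : ∀ x, 0 ≤ f x) (hs : MeasurableSet s) : IntegrableOn f s μ := by
  simpa only [mul_one] using (integrableOn_comp_iff_of_map_eq_withDensity hX hlaw hf hf0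
    (measurable_const (a := (1 : ℝ))) hs).1 integrableOn_const

lemma measure_preimage_ne_zero_of_map_eq_withDensity (hX : AEMeasurable X P)
    (hlaw : P.map X = μ.withDensity fun x ↦ ENNReal.ofReal (f x)) (hf : Measurable f)
    (hfpos : ∀ x, 0 < f x) (hs : MeasurableSet s) (hμs : μ s ≠ 0) : P (X ⁻¹' s) ≠ 0 := by
  rw [← Measure.map_apply_of_aemeasurable hX hs, hlaw]
  exact mt (withDensity_absolutelyContinuous' hf.ennreal_ofReal.aemeasurable
    (.of_forall fun x ↦ (ENNReal.ofReal_pos.2 (hfpos x)).ne') ·) hμs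

lemma withDensity_map_add_right {G : Type*} [AddGroup G] [MeasurableSpace G] [MeasurableAdd G]
    (μ : Measure G) [μ.IsAddRightInvariant] (f : G → ENNReal) (c : G) :
    (μ.withDensity f).map (· + c) = μ.withDensity fun x ↦ f (x - c) := by
  ext s hs
  have hshift := (measurePreserving_add_right μ c).setLIntegral_comp_preimage_emb
    (measurableEmbedding_addRight c) (fun x ↦ f (x - c)) s
  rw [Measure.map_apply (measurable_add_const c) hs, withDensity_apply _ hs,
    withDensity_apply _ (measurable_add_const c hs), ← hshift]
  simp only [add_sub_cancel_right]

end Density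

theorem setIntegral_div_measure_le_of_monotoneLikelihoodRatio {Ω α : Type*} [MeasurableSpace Ω]
    {P : Measure Ω} [IsFiniteMeasure P] [LinearOrder α] [TopologicalSpace α]
    [OrderClosedTopology α] [MeasurableSpace α] [BorelSpace α] {μ : Measure α} [SFinite μ]
    {X Y : Ω → α} {a b g : α → ℝ} {s : Set α} (hX : AEMeasurable X P) (hY : AEMeasurable Y P)
    (hXlaw : P.map X = μ.withDensity fun x ↦ ENNReal.ofReal (a x))
    (hYlaw : P.map Y = μ.withDensity fun x ↦ ENNReal.ofReal (b x))
    (ha : Measurable a) (hb : Measurable b) (ha0 : ∀ x, 0 ≤ a x) (hb0 : ∀ x, 0 ≤ b x)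
    (hab : MonotoneLikelihoodRatio a b) (hg : Monotone g) (hs : MeasurableSet s)
    (hXs : P (X ⁻¹' s) ≠ 0) (hYs : P (Y ⁻¹' s) ≠ 0)
    (hgX : IntegrableOn (fun ω ↦ g (X ω)) (X ⁻¹' s) P)
    (hgY : IntegrableOn (fun ω ↦ g (Y ω)) (Y ⁻¹' s) P) :
    (∫ ω in X ⁻¹' s, g (X ω) ∂P) / (P (X ⁻¹' s)).toReal ≤
      (∫ ω in Y ⁻¹' s, g (Y ω) ∂P) / (P (Y ⁻¹' s)).toReal := by
  rw [div_le_div_iff₀ (ENNReal.toReal_pos hXs (measure_ne_top _ _))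
      (ENNReal.toReal_pos hYs (measure_ne_top _ _)),
    toReal_measure_preimage_eq_of_map_eq_withDensity hX hXlaw ha ha0 hs,
    toReal_measure_preimage_eq_of_map_eq_withDensity hY hYlaw hb hb0 hs,
    setIntegral_comp_eq_of_map_eq_withDensity hX hXlaw ha ha0 hg.measurable hs,
    setIntegral_comp_eq_of_map_eq_withDensity hY hYlaw hb hb0 hg.measurable hs]
  rw [integrableOn_comp_iff_of_map_eq_withDensity hX hXlaw ha ha0 hg.measurable hs] at hgX
  rw [integrableOn_comp_iff_of_map_eq_withDensity hY hYlaw hb hb0 hg.measurable hs] at hgY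
  exact hab.integral_mul_integral_le hg (integrableOn_of_map_eq_withDensity hX hXlaw ha ha0 hs)
    (integrableOn_of_map_eq_withDensity hY hYlaw hb hb0 hs) hgX hgY

theorem logconcave_conditional_monotonicity_general {Ω : Type*} [MeasurableSpace Ω]
    (P : Measure Ω) [IsFiniteMeasure P] (ξ : Ω → ℝ) (hξ : AEMeasurable ξ P)
    (φ : ℝ → ℝ) (hφpos : ∀ x, 0 < φ x)
    (hφconc : ConcaveOn ℝ Set.univ (fun x => Real.log (φ x)))
    (hlaw : P.map ξ = volume.withDensity (fun y => ENNReal.ofReal (φ y)))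
    (δ : ℝ) (hδ : 0 ≤ δ) (g : ℝ → ℝ) (hg : Monotone g)
    (hgξ : IntegrableOn (fun ω => g (ξ ω)) {ω | 0 < ξ ω} P)
    (hgξδ : IntegrableOn (fun ω => g (ξ ω + δ)) {ω | 0 < ξ ω + δ} P) :
    0 < (P {ω | 0 < ξ ω + δ}).toReal ∧ 0 < (P {ω | 0 < ξ ω}).toReal ∧
    (∫ ω in {ω | 0 < ξ ω}, g (ξ ω) ∂P) / (P {ω | 0 < ξ ω}).toReal ≤
      (∫ ω in {ω | 0 < ξ ω + δ}, g (ξ ω + δ) ∂P) / (P {ω | 0 < ξ ω + δ}).toReal := by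
  have hφ : Measurable φ := (continuous_of_concaveOn_log hφpos hφconc).measurable
  have hφδ : Measurable fun x ↦ φ (x - δ) := hφ.comp (measurable_sub_const δ)
  have hξδ : AEMeasurable (fun ω ↦ ξ ω + δ) P := hξ.add_const δ
  have hlawδ : P.map (fun ω ↦ ξ ω + δ) =
      volume.withDensity fun y ↦ ENNReal.ofReal (φ (y - δ)) := by
    rw [← withDensity_map_add_right volume (fun y ↦ ENNReal.ofReal (φ y)), ← hlaw,
      AEMeasurable.map_map_of_aemeasurable (measurable_add_const δ).aemeasurable hξ,
      Function.comp_def]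
  have hIoi : volume (Set.Ioi (0 : ℝ)) ≠ 0 := by simp
  have hP : P {ω | 0 < ξ ω} ≠ 0 :=
    measure_preimage_ne_zero_of_map_eq_withDensity hξ hlaw hφ hφpos measurableSet_Ioi hIoi
  have hPδ : P {ω | 0 < ξ ω + δ} ≠ 0 := measure_preimage_ne_zero_of_map_eq_withDensity hξδ hlawδ
    hφδ (fun x ↦ hφpos (x - δ)) measurableSet_Ioi hIoi
  exact ⟨ENNReal.toReal_pos hPδ (measure_ne_top _ _), ENNReal.toReal_pos hP (measure_ne_top _ _),
    setIntegral_div_measure_le_of_monotoneLikelihoodRatio hξ hξδ hlaw hlawδ hφ hφδ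
      (fun x ↦ (hφpos x).le) (fun x ↦ (hφpos (x - δ)).le)
      (monotoneLikelihoodRatio_comp_sub_right hφpos hφconc hδ) hg measurableSet_Ioi hP hPδ
      hgξ hgξδ⟩

/-- Let `ξ` have a strictly positive log-concave density `φ` on `ℝ`.
Then for every `δ ≥ 0` and every bounded non-decreasing `g : ℝ → ℝ`,
`E[g(ξ+δ) | ξ+δ > 0] ≥ E[g(ξ) | ξ > 0]`; both conditioning probabilities are strictly
positive. -/
theorem logconcave_conditional_monotonicity
    {Ω : Type*} [MeasurableSpace Ω] (P : Measure Ω) [IsProbabilityMeasure P]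
    (ξ : Ω → ℝ) (hξ : Measurable ξ)
    (φ : ℝ → ℝ) (hφpos : ∀ x, 0 < φ x)
    (hφconc : ConcaveOn ℝ Set.univ (fun x => Real.log (φ x)))
    (hlaw : P.map ξ = MeasureTheory.volume.withDensity (fun y => ENNReal.ofReal (φ y)))
    (δ : ℝ) (hδ : 0 ≤ δ)
    (g : ℝ → ℝ) (hg : Monotone g) (hgb : ∃ C : ℝ, ∀ x, |g x| ≤ C) :
    0 < (P {ω | 0 < ξ ω + δ}).toReal ∧ 0 < (P {ω | 0 < ξ ω}).toReal ∧
    (∫ ω in {ω | 0 < ξ ω}, g (ξ ω) ∂P) / (P {ω | 0 < ξ ω}).toReal ≤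
      (∫ ω in {ω | 0 < ξ ω + δ}, g (ξ ω + δ) ∂P) / (P {ω | 0 < ξ ω + δ}).toReal := by
  obtain ⟨C, hC⟩ := hgb
  have hint {X : Ω → ℝ} (hX : Measurable X) : Integrable (fun ω ↦ g (X ω)) P :=
    .of_bound (hg.measurable.comp hX).aestronglyMeasurable C (.of_forall fun ω ↦ hC (X ω))
  exact logconcave_conditional_monotonicity_general P ξ hξ.aemeasurable φ hφpos hφconc hlaw δ hδ g
    hg (hint hξ).integrableOn (hint (hξ.add_const δ)).integrableOn
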